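/- Let A₁, A₂ be real 2×2 matrices and let P₀ = ℝ², P₁ = (A₁+iI)ℝ², P₂ = (A₂+iI)ℝ² be totally-real planes in ℂ² (i.e., Pⱼ ∩ iPⱼ = {0} for j = 0,1,2). Assume that each of the pairwise unions P₀ ∪ P₁, P₀ ∪ P₂, P₁ ∪ P₂ is locally polynomially convex at the origin, and that det A₁ = 0, det A₂ ≥ 0, and det[A₁,A₂] > 0. Then P₀ ∪ P₁ ∪ P₂ is locally polynomially convex at the origin. -/

import Mathlib

open Complex ComplexConjugate
/-- The polynomially convex hull of a set `K ⊆ ℂ²`. -/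
def polyHull2 (K : Set (ℂ × ℂ)) : Set (ℂ × ℂ) :=
  { z | ∀ p : MvPolynomial (Fin 2) ℂ,
      ‖MvPolynomial.eval (fun i => if i = 0 then z.1 else z.2) p‖ ≤
        sSup ((fun w : ℂ × ℂ =>
          ‖MvPolynomial.eval (fun i => if i = 0 then w.1 else w.2) p‖) '' K) }

/-- A set `K ⊆ ℂ²` is polynomially convex if it equals its polynomially convex hull. -/
def PolyConvex2 (K : Set (ℂ × ℂ)) : Prop := polyHull2 K = K

/-- The closed Euclidean ball of radius `r` centred at the origin in `ℂ²`. -/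
def eClosedBall (r : ℝ) : Set (ℂ × ℂ) := { z | ‖z.1‖ ^ 2 + ‖z.2‖ ^ 2 ≤ r ^ 2 }

/-- A set is locally polynomially convex at the origin. -/
def LocPolyConvexAt0 (E : Set (ℂ × ℂ)) : Prop :=
  ∃ r > (0 : ℝ), PolyConvex2 (E ∩ eClosedBall r)

/-- The standard real plane `ℝ² = {(x,y) : x, y ∈ ℝ} ⊆ ℂ²`. -/
def plane0 : Set (ℂ × ℂ) := { zw | ∃ x y : ℝ, zw = ((x : ℂ), (y : ℂ)) }

/-- The plane `(A + iI)ℝ² ⊆ ℂ²` for a real `2×2` matrix `A`. -/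
def planeOf (A : Matrix (Fin 2) (Fin 2) ℝ) : Set (ℂ × ℂ) :=
  { zw | ∃ x y : ℝ,
      zw = (((A 0 0 * x + A 0 1 * y : ℝ) : ℂ) + Complex.I * (x : ℂ),
            ((A 1 0 * x + A 1 1 * y : ℝ) : ℂ) + Complex.I * (y : ℂ)) }

/-- A subset `S ⊆ ℂ²` is totally real if `S ∩ iS = {0}`. -/
def TotallyRealSet (S : Set (ℂ × ℂ)) : Prop :=
  S ∩ ((fun v => Complex.I • v) '' S) = {0}

open Filter Topology

lemma aux_unit {X : Type*} [TopologicalSpace X] [CompactSpace X]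
    (B : Subalgebra ℂ C(X, ℂ)) (hB : IsClosed (B : Set C(X, ℂ))) (P : B)
    (h : ∀ k, (P : C(X, ℂ)) k ∈ slitPlane ∨ (P : C(X, ℂ)) k = 0) (s : ℝ) :
    IsUnit (1 + ((|s| : ℝ) : ℂ) • P : B) := by
  have : CompleteSpace B := hB.completeSpace_coe
  let F : ℝ → B := fun s => 1 + ((|s| : ℝ) : ℂ) • P
  have hF : Continuous F := by
    have : Continuous fun s : ℝ => ((|s| : ℝ) : ℂ) := by fun_prop
    exact continuous_const.add (this.smul continuous_const)
  have hopen : IsOpen {s | IsUnit (F s)} := Units.isOpen.preimage hF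
  have hclosed : IsClosed {s | IsUnit (F s)} := by
    rw [← closure_subset_iff_isClosed]
    intro t ht
    rw [mem_closure_iff_clusterPt] at ht
    have hu : IsUnit ((F t : B) : C(X, ℂ)) := by
      rw [ContinuousMap.isUnit_iff_forall_ne_zero]
      intro k hk
      have hk' : 1 + ((|t| : ℝ) : ℂ) * (P : C(X, ℂ)) k = 0 := by simpa [F] using hk
      rcases h k with h1 | h1
      · rw [mem_slitPlane_iff] at h1
        have hre := congrArg Complex.re hk'
        have him := congrArg Complex.im hk'
        simp at hre him
        rcases h1 with h1 | h1
        · have := mul_nonneg (abs_nonneg t) h1.le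
          linarith
        · rcases him with him | him
          · simp [him] at hre
          · exact h1 him
      · rw [h1] at hk'; simp at hk'
    have ht' : (𝓝 t ⊓ 𝓟 {s | IsUnit (F s)}).NeBot := ht
    refine Subalgebra.isUnit_of_isUnit_val_of_eventually (l := map F (𝓝 t ⊓ 𝓟 {s | IsUnit (F s)}))
      B hu ?_ ?_ (ht'.map F)
    · exact (map_mono inf_le_left).trans hF.continuousAt
    · rw [eventually_map]
      exact Eventually.filter_mono inf_le_right (by simp)
  have huniv := IsClopen.eq_univ ⟨hclosed, hopen⟩ ⟨0, by simp [F]⟩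
  have : s ∈ {s | IsUnit (F s)} := by rw [huniv]; trivial
  exact this

lemma aux_slit {a : ℂ} (h : a ∈ slitPlane ∨ a = 0) {s : ℝ} (hs : 0 ≤ s) :
    1 + (s : ℂ) * a ∈ slitPlane := by
  rcases h with h | h
  · rw [mem_slitPlane_iff] at h ⊢
    simp
    rcases h with h | h
    · left; have := mul_nonneg hs h.le; linarith
    · rcases hs.eq_or_lt with h0 | h0
      · left; simp [← h0]
      · right; exact ⟨h0.ne', h⟩
  · simp [h]

lemma aux_log {X : Type*} [TopologicalSpace X] [CompactSpace X]
    (B : Subalgebra ℂ C(X, ℂ)) (hB : IsClosed (B : Set C(X, ℂ))) (P : B)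
    (h : ∀ k, (P : C(X, ℂ)) k ∈ slitPlane ∨ (P : C(X, ℂ)) k = 0) (s : ℝ) (hs : 0 ≤ s) :
    ∃ l : B, ∀ k, (l : C(X, ℂ)) k = Complex.log (1 + (s : ℂ) * (P : C(X, ℂ)) k) := by
  have : CompleteSpace B := hB.completeSpace_coe
  let F : ℝ → B := fun s => 1 + ((|s| : ℝ) : ℂ) • P
  have hF : Continuous F := by
    have : Continuous fun s : ℝ => ((|s| : ℝ) : ℂ) := by fun_prop
    exact continuous_const.add (this.smul continuous_const)
  have hU : ∀ s, IsUnit (F s) := aux_unit B hB P h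
  let G : ℝ → B := fun s => P * Ring.inverse (F s)
  have hG : Continuous G := by
    refine continuous_const.mul ?_
    rw [continuous_iff_continuousAt]
    intro t
    have h0 : ContinuousAt Ring.inverse (F t) := by
      have := NormedRing.inverse_continuousAt (hU t).unit
      rwa [IsUnit.unit_spec] at this
    exact ContinuousAt.comp h0 hF.continuousAt
  refine ⟨∫ t in (0 : ℝ)..s, G t, fun k => ?_⟩
  let L : B →L[ℂ] ℂ :=
    (ContinuousMap.evalCLM ℂ k).comp (Subalgebra.toSubmodule B).subtypeL
  have hL : ∀ b : B, L b = (b : C(X, ℂ)) k := fun b => rfl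
  rw [← hL, ← ContinuousLinearMap.intervalIntegral_comp_comm L (hG.intervalIntegrable _ _)]
  have hval : ∀ t, 0 ≤ t → L (G t) = (P : C(X, ℂ)) k / (1 + (t : ℂ) * (P : C(X, ℂ)) k) := by
    intro t ht
    have h1 : L (F t) = 1 + (t : ℂ) * (P : C(X, ℂ)) k := by
      simp [hL, F, abs_of_nonneg ht]
    have h2 : L (Ring.inverse (F t)) * L (F t) = 1 := by
      have := Ring.inverse_mul_cancel _ (hU t)
      have h3 := congrArg L this
      simpa [hL] using h3
    have h3 : L (G t) = (P : C(X, ℂ)) k * L (Ring.inverse (F t)) := by simp [hL, G]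
    have h4 : L (F t) ≠ 0 := right_ne_zero_of_mul_eq_one h2
    rw [h3, ← h1, eq_div_iff h4, mul_assoc, h2, mul_one]
  have := intervalIntegral.integral_eq_sub_of_hasDerivAt (a := 0) (b := s)
    (f := fun t : ℝ => Complex.log (1 + (t : ℂ) * (P : C(X, ℂ)) k)) (f' := fun t => L (G t)) ?_ ?_
  · rw [this]; simp
  · intro t ht
    rw [Set.uIcc_of_le hs] at ht
    simp only [hval t ht.1]
    have hd : HasDerivAt (fun t : ℝ => 1 + (t : ℂ) * (P : C(X, ℂ)) k) ((P : C(X, ℂ)) k) t := by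
      have := ((Complex.ofRealCLM.hasDerivAt (x := t)).mul_const ((P : C(X, ℂ)) k)).const_add 1
      simpa using this
    exact hd.clog_real (aux_slit (h k) ht.1)
  · exact (L.continuous.comp hG).intervalIntegrable _ _

lemma aux_bd {a : ℂ} {κ t : ℝ} (hκ : 0 < κ) (hκ1 : κ < 1) (ht : 0 ≤ t)
    (h : -(1 - κ) * ‖a‖ ≤ a.re) : κ * ‖a‖ ≤ ‖(t : ℂ) + a‖ := by
  apply le_of_sq_le_sq ?_ (norm_nonneg _)
  have h1 : ‖(t : ℂ) + a‖ ^ 2 = t ^ 2 + 2 * t * a.re + ‖a‖ ^ 2 := by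
    rw [← Complex.normSq_eq_norm_sq, ← Complex.normSq_eq_norm_sq, Complex.normSq_apply,
      Complex.normSq_apply]
    simp; ring
  rw [h1]
  have h2 := mul_le_mul_of_nonneg_left h ht
  nlinarith [sq_nonneg (t - (1 - κ) * ‖a‖), mul_nonneg (mul_nonneg hκ.le (sub_pos.2 hκ1).le) (sq_nonneg ‖a‖)]

lemma aux_slit' {a : ℂ} {κ : ℝ} (hκ : 0 < κ) 
    (h : -(1 - κ) * ‖a‖ ≤ a.re) : a ∈ slitPlane ∨ a = 0 := by
  by_cases ha : a = 0
  · right; exact ha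
  left
  rw [mem_slitPlane_iff_not_le_zero, Complex.le_def]
  rintro ⟨h1, h2⟩
  simp at h1 h2
  have h3 : ‖a‖ = -a.re := by
    have : a = ((a.re : ℝ) : ℂ) := by apply Complex.ext <;> simp [h2]
    rw [this, Complex.norm_real, Real.norm_eq_abs, abs_of_nonpos h1]; simp
  have := norm_pos_iff.2 ha
  nlinarith

lemma aux_xlog {X : Type*} [TopologicalSpace X] [CompactSpace X]
    (B : Subalgebra ℂ C(X, ℂ)) (hB : IsClosed (B : Set C(X, ℂ))) (P : B) (κ : ℝ)
    (hκ : 0 < κ) (hκ1 : κ < 1)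
    (h : ∀ k, -(1 - κ) * ‖(P : C(X, ℂ)) k‖ ≤ ((P : C(X, ℂ)) k).re) :
    ∃ l : B, ∀ k, (l : C(X, ℂ)) k = (P : C(X, ℂ)) k * Complex.log ((P : C(X, ℂ)) k) := by
  have hs := fun k => aux_slit' hκ (h k)
  have key : ∀ τ : ℝ, 0 < τ → ∃ l : B, ∀ k, ‖(l : C(X, ℂ)) k -
      (P : C(X, ℂ)) k * Complex.log ((P : C(X, ℂ)) k)‖ ≤ κ⁻¹ * τ := by
    intro τ hτ
    obtain ⟨l, hl⟩ := aux_log B hB P hs τ⁻¹ (inv_pos.2 hτ).le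
    refine ⟨P * (l + algebraMap ℂ B (Real.log τ : ℂ)), fun k => ?_⟩
    simp only [MulMemClass.coe_mul, ContinuousMap.mul_apply, AddMemClass.coe_add,
      ContinuousMap.add_apply, hl, ← mul_sub, norm_mul]
    generalize ha : (P : C(X, ℂ)) k = a
    have hb := h k
    have hsl := hs k
    rw [ha] at hb hsl
    rcases hsl with hsl | hsl
    swap
    · simp [hsl]; positivity
    have hpos : 0 < ‖a‖ := norm_pos_iff.2 (slitPlane_ne_zero hsl)
    have hslt : ∀ t : ℝ, 0 ≤ t → (t : ℂ) + a ∈ slitPlane := by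
      intro t ht
      rw [mem_slitPlane_iff] at hsl ⊢
      simp
      rcases hsl with h | h
      · left; linarith
      · right; exact h
    have e1 : Complex.log (1 + ((τ⁻¹ : ℝ) : ℂ) * a) + ((algebraMap ℂ B (Real.log τ : ℂ) : B) : C(X, ℂ)) k
        = Complex.log (τ + a) := by
      have : (algebraMap ℂ B (Real.log τ : ℂ) : C(X, ℂ)) k = (Real.log τ : ℂ) := by
        simp 
      rw [this]
      have hne : (1 + ((τ⁻¹ : ℝ) : ℂ) * a) ≠ 0 :=
        slitPlane_ne_zero (aux_slit (Or.inl hsl) (inv_pos.2 hτ).le)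
      have h2 := Complex.log_ofReal_mul hτ hne
      rw [add_comm, ← h2]
      congr 1
      have : (τ : ℂ) ≠ 0 := by exact_mod_cast hτ.ne'
      push_cast
      field_simp
    rw [e1]
    have hmv := norm_image_sub_le_of_norm_deriv_le_segment' (a := 0) (b := τ)
      (f := fun t : ℝ => Complex.log ((t : ℂ) + a)) (f' := fun t => 1 / ((t : ℂ) + a))
      (C := (κ * ‖a‖)⁻¹) ?_ ?_ τ (Set.right_mem_Icc.2 hτ.le)
    · simp only [ofReal_zero, zero_add, sub_zero] at hmv
      calc ‖a‖ * _ ≤ ‖a‖ * ((κ * ‖a‖)⁻¹ * τ) := by gcongr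
        _ = κ⁻¹ * τ := by field_simp
    · intro t ht
      have hd : HasDerivAt (fun t : ℝ => (t : ℂ) + a) 1 t := by
        have := (Complex.ofRealCLM.hasDerivAt (x := t)).add_const a
        simpa using this
      exact (hd.clog_real (hslt t ht.1)).hasDerivWithinAt
    · intro t ht
      rw [norm_div, norm_one, one_div]
      have := aux_bd hκ hκ1 ht.1 hb
      gcongr
  have hcont : Continuous fun k => (P : C(X, ℂ)) k * Complex.log ((P : C(X, ℂ)) k) := by
    choose l hl using fun n : ℕ => key (1 / ((n : ℝ) + 1)) (by positivity)
    have hu : TendstoUniformly (fun n k => (l n : C(X, ℂ)) k)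
        (fun k => (P : C(X, ℂ)) k * Complex.log ((P : C(X, ℂ)) k)) atTop := by
      rw [Metric.tendstoUniformly_iff]
      intro ε hε
      have ht : Tendsto (fun n : ℕ => κ⁻¹ * (1 / ((n : ℝ) + 1))) atTop (𝓝 (κ⁻¹ * 0)) :=
        tendsto_one_div_add_atTop_nhds_zero_nat.const_mul _
      rw [mul_zero] at ht
      filter_upwards [ht.eventually_lt_const hε] with n hn k
      rw [dist_comm, dist_eq_norm]
      exact (hl n k).trans_lt hn
    exact hu.continuous (Eventually.of_forall fun n => (l n : C(X, ℂ)).continuous).frequently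
  refine ⟨⟨⟨_, hcont⟩, ?_⟩, fun k => rfl⟩
  have : (⟨_, hcont⟩ : C(X, ℂ)) ∈ closure (B : Set C(X, ℂ)) := by
    rw [Metric.mem_closure_iff]
    intro ε hε
    obtain ⟨l, hl⟩ := key (κ * (ε / 2)) (by positivity)
    refine ⟨l, l.2, ?_⟩
    rw [dist_comm]
    refine lt_of_le_of_lt ?_ (half_lt_self hε)
    rw [ContinuousMap.dist_le (by positivity)]
    intro k
    rw [dist_eq_norm]
    refine (hl k).trans_eq ?_
    field_simp
  rwa [hB.closure_eq] at this

lemma aux_cone {W : ℂ} {ε β : ℝ} (hε : 0 < ε) (hε1 : ε < Real.pi) (hβ : |β| = ε / 2)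
    (h : (∃ y : ℝ, 0 ≤ y ∧ W = -(y : ℂ)) ∨ (W ≠ 0 → |arg W| ≤ Real.pi - ε)) :
    -(1 - (1 - Real.cos (ε / 2))) * ‖Complex.exp (β * I) * W‖ ≤ (Complex.exp (β * I) * W).re := by
  have hn : ‖Complex.exp (β * I) * W‖ = ‖W‖ := by
    rw [norm_mul, Complex.norm_exp_ofReal_mul_I, one_mul]
  have hcb : Real.cos β = Real.cos (ε / 2) := by rw [← Real.cos_abs, hβ]
  rw [hn]
  rcases h with ⟨y, hy, rfl⟩ | h
  · rw [norm_neg, Complex.norm_real, Real.norm_eq_abs, abs_of_nonneg hy]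
    have : (Complex.exp (β * I) * -(y : ℂ)).re = -(Real.cos β * y) := by
      simp [Complex.exp_ofReal_mul_I_re]
    rw [this, hcb]; linarith
  · by_cases hW : W = 0
    · simp [hW]
    have h1 := h hW
    have h2 : (Complex.exp (β * I) * W).re = ‖W‖ * Real.cos (β + arg W) := by
      conv_lhs => rw [← Complex.norm_mul_exp_arg_mul_I W]
      rw [mul_left_comm, ← Complex.exp_add, ← add_mul, ← Complex.ofReal_add,
        Complex.re_ofReal_mul, Complex.exp_ofReal_mul_I_re]
    rw [h2]
    have h3 : Real.cos (Real.pi - ε / 2) ≤ Real.cos (β + arg W) := by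
      rw [← Real.cos_abs (β + arg W)]
      apply Real.cos_le_cos_of_nonneg_of_le_pi (abs_nonneg _) (by linarith)
      have := abs_add_le β (arg W)
      linarith
    rw [Real.cos_pi_sub] at h3
    nlinarith [norm_nonneg W]

lemma aux_logdiff1 {y η : ℝ} (hy : 0 < y) (hη : 0 < η) (hη1 : η < Real.pi) :
    Complex.log (Complex.exp (((-η : ℝ) : ℂ) * I) * -(y : ℂ)) - Complex.log (Complex.exp ((η : ℂ) * I) * -(y : ℂ))
      = (2 * Real.pi - 2 * η) * I := by
  have e1 : Complex.exp (((-η : ℝ) : ℂ) * I) * -(y : ℂ) = y * Complex.exp (((Real.pi - η : ℝ) : ℂ) * I) := by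
    have : (((Real.pi - η : ℝ) : ℂ) * I) = Real.pi * I + ((-η : ℝ) : ℂ) * I := by push_cast; ring
    rw [this, Complex.exp_add, Complex.exp_pi_mul_I]; ring
  have e2 : Complex.exp ((η : ℂ) * I) * -(y : ℂ) = y * Complex.exp (((η - Real.pi : ℝ) : ℂ) * I) := by
    have : (((η - Real.pi : ℝ) : ℂ) * I) = η * I - Real.pi * I := by push_cast; ring
    rw [this, Complex.exp_sub, Complex.exp_pi_mul_I]; ring
  rw [e1, e2, Complex.log_ofReal_mul hy (Complex.exp_ne_zero _),
    Complex.log_ofReal_mul hy (Complex.exp_ne_zero _), Complex.log_exp, Complex.log_exp]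
  · push_cast; ring
  all_goals simp <;> linarith

lemma aux_logdiff2 {W : ℂ} {η : ℝ} (hW : W ≠ 0) (hη : 0 < η) (h : |arg W| ≤ Real.pi - 2 * η) :
    Complex.log (Complex.exp (((-η : ℝ) : ℂ) * I) * W) - Complex.log (Complex.exp ((η : ℂ) * I) * W)
      = - (2 * η) * I := by
  have hpi := Real.pi_pos
  have h0 := abs_nonneg (arg W)
  rw [abs_le] at h
  have key : ∀ β : ℝ, |β| ≤ η → Complex.log (Complex.exp ((β : ℂ) * I) * W) = β * I + Complex.log W := by
    intro β hβ
    rw [abs_le] at hβ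
    have ha : arg (Complex.exp ((β : ℂ) * I)) = β := by
      rw [Complex.arg_exp_mul_I, toIocMod_eq_self]
      constructor <;> linarith
    rw [(Complex.log_mul_eq_add_log_iff (Complex.exp_ne_zero _) hW).2, Complex.log_exp]
    · simp; linarith
    · simp; linarith
    · rw [ha]; constructor <;> linarith
  rw [key _ (by rw [abs_neg, abs_of_pos hη]), key _ (by rw [abs_of_pos hη])]
  push_cast; ring

lemma aux_sep {X : Type*} [TopologicalSpace X] [CompactSpace X]
    (B : Subalgebra ℂ C(X, ℂ)) (hB : IsClosed (B : Set C(X, ℂ))) (W : B) (S : Set X) (ε : ℝ)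
    (hε : 0 < ε) (hε1 : ε < Real.pi)
    (h1 : ∀ k ∈ S, ∃ y : ℝ, 0 ≤ y ∧ (W : C(X, ℂ)) k = -(y : ℂ))
    (h2 : ∀ k ∉ S, (W : C(X, ℂ)) k ≠ 0 → |arg ((W : C(X, ℂ)) k)| ≤ Real.pi - ε) :
    ∃ l : B, (∀ k ∈ S, (l : C(X, ℂ)) k = 2 * Real.pi * I * (W : C(X, ℂ)) k) ∧
      ∀ k ∉ S, (l : C(X, ℂ)) k = 0 := by
  have hc : ∀ β : ℝ, |β| = ε / 2 → ∃ l : B, ∀ k, (l : C(X, ℂ)) k =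
      (W : C(X, ℂ)) k * Complex.log (Complex.exp (β * I) * (W : C(X, ℂ)) k) := by
    intro β hβ
    obtain ⟨l, hl⟩ := aux_xlog B hB (Complex.exp (β * I) • W) (1 - Real.cos (ε / 2))
      (by
        have := Real.cos_lt_cos_of_nonneg_of_le_pi (x := 0) (y := ε / 2) le_rfl (by linarith) (by linarith)
        rw [Real.cos_zero] at this; linarith)
      (by
        have := Real.cos_pos_of_mem_Ioo (x := ε / 2) ⟨by linarith, by linarith⟩
        linarith)
      (by
        intro k
        have : ((Complex.exp (β * I) • W : B) : C(X, ℂ)) k = Complex.exp (β * I) * (W : C(X, ℂ)) k := by simp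
        rw [this]
        refine aux_cone hε hε1 hβ ?_
        by_cases hk : k ∈ S
        · exact Or.inl (h1 k hk)
        · exact Or.inr (h2 k hk))
    refine ⟨Complex.exp (-(β * I)) • l, fun k => ?_⟩
    have : ((Complex.exp (-(β * I)) • l : B) : C(X, ℂ)) k = Complex.exp (-(β * I)) * (l : C(X, ℂ)) k := by simp
    rw [this, hl k]
    have : ((Complex.exp (β * I) • W : B) : C(X, ℂ)) k = Complex.exp (β * I) * (W : C(X, ℂ)) k := by simp
    rw [this, ← mul_assoc, ← mul_assoc, ← Complex.exp_add]
    simp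
  obtain ⟨l1, hl1⟩ := hc (-(ε / 2)) (by rw [abs_neg, abs_of_pos (by linarith)])
  obtain ⟨l2, hl2⟩ := hc (ε / 2) (by rw [abs_of_pos (by linarith)])
  have hv : ∀ k, ((l1 - l2 + (ε * I : ℂ) • W : B) : C(X, ℂ)) k =
      (W : C(X, ℂ)) k * (Complex.log (Complex.exp (((-(ε / 2) : ℝ) : ℂ) * I) * (W : C(X, ℂ)) k) -
        Complex.log (Complex.exp (((ε / 2 : ℝ) : ℂ) * I) * (W : C(X, ℂ)) k) + ε * I) := by
    intro k
    simp only [AddMemClass.coe_add, AddSubgroupClass.coe_sub, ContinuousMap.add_apply,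
      ContinuousMap.sub_apply, hl1, hl2, SetLike.val_smul, ContinuousMap.smul_apply, smul_eq_mul]
    ring
  refine ⟨l1 - l2 + (ε * I : ℂ) • W, fun k hk => ?_, fun k hk => ?_⟩
  · rw [hv]
    obtain ⟨y, hy, hW⟩ := h1 k hk
    rcases hy.eq_or_lt with h0 | h0
    · simp [hW, ← h0]
    rw [hW, aux_logdiff1 h0 (by linarith) (by linarith)]
    push_cast; ring
  · rw [hv]
    by_cases h0 : (W : C(X, ℂ)) k = 0
    · simp [h0]
    rw [aux_logdiff2 h0 (by linarith) (by have := h2 k hk h0; linarith)]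
    push_cast; ring

lemma aux_peak {X : Type*} [TopologicalSpace X] [CompactSpace X]
    (B : Subalgebra ℂ C(X, ℂ)) (hB : IsClosed (B : Set C(X, ℂ))) (W : B) (S : Set X) (ε : ℝ)
    (hε : 0 < ε) (hε1 : ε < Real.pi)
    (h1 : ∀ k ∈ S, ∃ y : ℝ, 0 ≤ y ∧ (W : C(X, ℂ)) k = -(y : ℂ))
    (h2 : ∀ k ∉ S, (W : C(X, ℂ)) k ≠ 0 → |arg ((W : C(X, ℂ)) k)| ≤ Real.pi - ε) :
    ∃ κ : ℝ, 0 < κ ∧ ∀ s : ℝ, 0 < s → ∃ l : B, ∀ k,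
      (s * κ * ‖(W : C(X, ℂ)) k‖ * ‖(l : C(X, ℂ)) k‖ ≤ 1) ∧
      ((W : C(X, ℂ)) k = 0 → (l : C(X, ℂ)) k = 1) := by
  have hcos1 : Real.cos (ε / 2) < 1 := by
    have := Real.cos_lt_cos_of_nonneg_of_le_pi (x := 0) (y := ε / 2) le_rfl (by linarith) (by linarith)
    rwa [Real.cos_zero] at this
  have hcos2 := Real.cos_pos_of_mem_Ioo (x := ε / 2) ⟨by linarith, by linarith⟩
  have hcone : ∀ k, -(1 - (1 - Real.cos (ε / 2))) * ‖Complex.exp ((ε / 2 : ℝ) * I) * (W : C(X, ℂ)) k‖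
      ≤ (Complex.exp ((ε / 2 : ℝ) * I) * (W : C(X, ℂ)) k).re := by
    intro k
    refine aux_cone hε hε1 (abs_of_pos (by linarith)) ?_
    by_cases hk : k ∈ S
    · exact Or.inl (h1 k hk)
    · exact Or.inr (h2 k hk)
  refine ⟨1 - Real.cos (ε / 2), by linarith, fun s hs => ?_⟩
  have hPk : ∀ k, ((Complex.exp ((ε / 2 : ℝ) * I) • W : B) : C(X, ℂ)) k =
    Complex.exp ((ε / 2 : ℝ) * I) * (W : C(X, ℂ)) k := fun k => by simp
  obtain ⟨v, hv⟩ := aux_unit B hB (Complex.exp ((ε / 2 : ℝ) * I) • W) (by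
    intro k
    rw [hPk]
    exact aux_slit' (by linarith) (hcone k)) s
  refine ⟨((v⁻¹ : Bˣ) : B), fun k => ?_⟩
  have hm : ((v : B) : C(X, ℂ)) k * (((v⁻¹ : Bˣ) : B) : C(X, ℂ)) k = 1 := by
    have h := congrArg (fun b : B => (b : C(X, ℂ)) k) v.mul_inv
    exact h
  have hvk : ((v : B) : C(X, ℂ)) k = 1 + s * (Complex.exp ((ε / 2 : ℝ) * I) * (W : C(X, ℂ)) k) := by
    rw [hv, abs_of_pos hs]
    simp only [AddMemClass.coe_add, ContinuousMap.add_apply, OneMemClass.coe_one,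
      ContinuousMap.one_apply, SetLike.val_smul, ContinuousMap.smul_apply, smul_eq_mul]
  constructor
  · have hb := aux_bd (t := s⁻¹) (by linarith) (by linarith) (inv_pos.2 hs).le (hcone k)
    have hb2 : s * (1 - Real.cos (ε / 2)) * ‖(W : C(X, ℂ)) k‖ ≤ ‖((v : B) : C(X, ℂ)) k‖ := by
      rw [norm_mul, Complex.norm_exp_ofReal_mul_I, one_mul] at hb
      have e : ((v : B) : C(X, ℂ)) k = s * (((s⁻¹ : ℝ) : ℂ) + Complex.exp ((ε / 2 : ℝ) * I) * (W : C(X, ℂ)) k) := by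
        rw [hvk, mul_add]
        congr 1
        have : (s : ℂ) ≠ 0 := by exact_mod_cast hs.ne'
        push_cast; field_simp
      rw [e, norm_mul, Complex.norm_real, Real.norm_eq_abs, abs_of_pos hs, mul_assoc]
      exact mul_le_mul_of_nonneg_left hb hs.le
    calc _ ≤ ‖((v : B) : C(X, ℂ)) k‖ * ‖(((v⁻¹ : Bˣ) : B) : C(X, ℂ)) k‖ := by gcongr
      _ = 1 := by rw [← norm_mul, hm, norm_one]
  · intro h0
    rw [hvk, h0] at hm
    simpa using hm

lemma aux_root {a M c C : ℝ} (hM : 0 ≤ M) (hc : 0 < c)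
    (h : ∀ N : ℕ, c * a ^ N ≤ C * M ^ N) : a ≤ M := by
  by_contra hlt
  push Not at hlt
  have ha : 0 < a := hM.trans_lt hlt
  have ht : Tendsto (fun N : ℕ => C * (M / a) ^ N) atTop (𝓝 (C * 0)) :=
    (tendsto_pow_atTop_nhds_zero_of_lt_one (by positivity) ((div_lt_one ha).2 hlt)).const_mul _
  have : c ≤ C * 0 := by
    refine ge_of_tendsto' ht fun N => ?_
    have := h N
    rw [div_pow, ← mul_div_assoc, le_div_iff₀ (by positivity)]
    exact this
  linarith

def evp (z : ℂ × ℂ) : Fin 2 → ℂ := fun i => if i = 0 then z.1 else z.2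

lemma evp_cont : Continuous evp := by
  refine continuous_pi fun i => ?_
  unfold evp
  by_cases h : i = 0 <;> simp [h] <;> fun_prop

lemma evalp_cont (p : MvPolynomial (Fin 2) ℂ) :
    Continuous fun z : ℂ × ℂ => MvPolynomial.eval (evp z) p :=
  (MvPolynomial.continuous_eval p).comp evp_cont

lemma mem_polyHull2 {K : Set (ℂ × ℂ)} {z : ℂ × ℂ} : z ∈ polyHull2 K ↔
    ∀ p : MvPolynomial (Fin 2) ℂ, ‖MvPolynomial.eval (evp z) p‖ ≤
      sSup ((fun w : ℂ × ℂ => ‖MvPolynomial.eval (evp w) p‖) '' K) := Iff.rfl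

lemma le_supK {K : Set (ℂ × ℂ)} (hK : IsCompact K) (p : MvPolynomial (Fin 2) ℂ) {k : ℂ × ℂ}
    (hk : k ∈ K) : ‖MvPolynomial.eval (evp k) p‖ ≤
      sSup ((fun w : ℂ × ℂ => ‖MvPolynomial.eval (evp w) p‖) '' K) :=
  le_csSup (hK.image (evalp_cont p).norm).bddAbove ⟨k, hk, rfl⟩

lemma subset_hull {K : Set (ℂ × ℂ)} (hK : IsCompact K) : K ⊆ polyHull2 K :=
  fun _ hk p => le_supK hK p hk

lemma hull_le {K : Set (ℂ × ℂ)} (hne : K.Nonempty) {z : ℂ × ℂ} (hz : z ∈ polyHull2 K)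
    (p : MvPolynomial (Fin 2) ℂ) {M : ℝ} (h : ∀ k ∈ K, ‖MvPolynomial.eval (evp k) p‖ ≤ M) :
    ‖MvPolynomial.eval (evp z) p‖ ≤ M := by
  refine (mem_polyHull2.1 hz p).trans (csSup_le (hne.image _) ?_)
  rintro _ ⟨k, hk, rfl⟩
  exact h k hk

theorem kallin {K1 K2 : Set (ℂ × ℂ)} (hK1 : IsCompact K1) (hK2 : IsCompact K2)
    (h01 : (0 : ℂ × ℂ) ∈ K1) (h02 : (0 : ℂ × ℂ) ∈ K2) (hc1 : PolyConvex2 K1) (hc2 : PolyConvex2 K2)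
    (p : MvPolynomial (Fin 2) ℂ)
    (hp1 : ∀ k ∈ K1, ∃ y : ℝ, 0 ≤ y ∧ MvPolynomial.eval (evp k) p = y)
    (ε : ℝ) (hε : 0 < ε) (hε1 : ε < Real.pi)
    (hp2 : ∀ k ∈ K2, MvPolynomial.eval (evp k) p ≠ 0 →
      |arg (-MvPolynomial.eval (evp k) p)| ≤ Real.pi - ε)
    (m : ℝ) (hm : 0 < m)
    (hp3 : ∀ k ∈ K1 ∪ K2, m * (‖k.1‖ ^ 2 + ‖k.2‖ ^ 2) ≤ ‖MvPolynomial.eval (evp k) p‖) :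
    PolyConvex2 (K1 ∪ K2) := by
  refine Set.Subset.antisymm ?_ (subset_hull (hK1.union hK2))
  intro x hx
  have hne : (K1 ∪ K2).Nonempty := ⟨0, Or.inl h01⟩
  let K' : Set (ℂ × ℂ) := insert x (K1 ∪ K2)
  have hK' : IsCompact K' := (hK1.union hK2).insert x
  have : CompactSpace K' := isCompact_iff_compactSpace.1 hK'
  let E : MvPolynomial (Fin 2) ℂ →ₐ[ℂ] C(K', ℂ) :=
    MvPolynomial.aeval (fun i => (⟨fun k => evp k.1 i,
      ((continuous_apply i).comp evp_cont).comp continuous_subtype_val⟩ : C(K', ℂ)))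
  have hE : ∀ q (k : K'), E q k = MvPolynomial.eval (evp k.1) q := by
    intro q k
    have h : (ContinuousMap.evalAlgHom ℂ ℂ k).comp E = MvPolynomial.aeval (evp k.1) := by
      apply MvPolynomial.algHom_ext
      intro i
      simp [E]
    have h2 := congrArg (fun f => f q) h
    simpa [MvPolynomial.aeval_eq_eval] using h2
  let B : Subalgebra ℂ C(K', ℂ) := E.range.topologicalClosure
  have hB : IsClosed (B : Set C(K', ℂ)) := E.range.isClosed_topologicalClosure
  have hEB : ∀ q, E q ∈ B := fun q => E.range.le_topologicalClosure ⟨q, rfl⟩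
  let x' : K' := ⟨x, Set.mem_insert _ _⟩
  have hbound : ∀ b : B, ∀ M : ℝ, (∀ k : K', k.1 ∈ K1 ∪ K2 → ‖(b : C(K', ℂ)) k‖ ≤ M) →
      ‖(b : C(K', ℂ)) x'‖ ≤ M := by
    intro b M hbM
    apply le_of_forall_pos_le_add
    intro δ hδ
    have hb : (b : C(K', ℂ)) ∈ closure (E.range : Set C(K', ℂ)) := by
      rw [← Subalgebra.topologicalClosure_coe]; exact b.2
    obtain ⟨_, ⟨q, rfl⟩, hq⟩ := Metric.mem_closure_iff.1 hb (δ / 2) (half_pos hδ)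
    rw [dist_eq_norm] at hq
    have hq' : ∀ k : K', ‖(b : C(K', ℂ)) k - MvPolynomial.eval (evp k.1) q‖ ≤ δ / 2 := by
      intro k
      rw [← hE]
      exact (ContinuousMap.norm_coe_le_norm _ k).trans hq.le
    have h1 : ‖MvPolynomial.eval (evp x) q‖ ≤ M + δ / 2 := by
      refine hull_le hne hx q fun k hk => ?_
      have h2 := hq' ⟨k, Set.mem_insert_of_mem _ hk⟩
      have h3 := hbM ⟨k, Set.mem_insert_of_mem _ hk⟩ hk
      have h4 := norm_sub_norm_le (MvPolynomial.eval (evp k) q) ((b : C(K', ℂ)) ⟨k, Set.mem_insert_of_mem _ hk⟩)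
      rw [norm_sub_rev] at h4
      simp only at h2
      linarith
    have h2 := hq' x'
    have h4 := norm_sub_norm_le ((b : C(K', ℂ)) x') (MvPolynomial.eval (evp x) q)
    simp only [x'] at h2 h4 ⊢
    linarith
  let W : B := ⟨E (-p), hEB _⟩
  have hW : ∀ k : K', (W : C(K', ℂ)) k = -MvPolynomial.eval (evp k.1) p := by
    intro k
    change E (-p) k = _
    rw [hE]; simp
  -- the partition
  let S : Set K' := {k | ∃ y : ℝ, 0 ≤ y ∧ MvPolynomial.eval (evp k.1) p = y}
  obtain ⟨ε', hε', hε'1, hS2⟩ : ∃ ε' : ℝ, 0 < ε' ∧ ε' < Real.pi ∧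
      ∀ k ∉ S, (W : C(K', ℂ)) k ≠ 0 → |arg ((W : C(K', ℂ)) k)| ≤ Real.pi - ε' := by
    by_cases hxS : x' ∈ S
    · refine ⟨ε, hε, hε1, fun k hk h0 => ?_⟩
      rw [hW] at h0 ⊢
      rcases k with ⟨k, rfl | hk1 | hk2⟩
      · exact absurd hxS hk
      · exact absurd (hp1 k hk1) hk
      · exact hp2 k hk2 (by simpa using h0)
    · have harg : |arg (-MvPolynomial.eval (evp x) p)| < Real.pi := by
        rw [abs_lt]
        refine ⟨Complex.neg_pi_lt_arg _, lt_of_le_of_ne (Complex.arg_le_pi _) fun hcon => ?_⟩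
        rw [Complex.arg_eq_pi_iff] at hcon
        apply hxS
        refine ⟨(MvPolynomial.eval (evp x) p).re, ?_, ?_⟩
        · have := hcon.1; simp at this; exact this.le
        · have := hcon.2; simp at this
          apply Complex.ext <;> simp [x', this]
      refine ⟨min ε (Real.pi - |arg (-MvPolynomial.eval (evp x) p)|), lt_min hε (by linarith),
        (min_le_left _ _).trans_lt hε1, fun k hk h0 => ?_⟩
      rw [hW] at h0 ⊢
      rcases k with ⟨k, rfl | hk1 | hk2⟩
      · have := min_le_right ε (Real.pi - |arg (-MvPolynomial.eval (evp k) p)|)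
        simp only
        linarith
      · exact absurd (hp1 k hk1) hk
      · have := min_le_left ε (Real.pi - |arg (-MvPolynomial.eval (evp x) p)|)
        have := hp2 k hk2 (by simpa using h0)
        simp only
        linarith
  have hS1 : ∀ k ∈ S, ∃ y : ℝ, 0 ≤ y ∧ (W : C(K', ℂ)) k = -(y : ℂ) := by
    rintro k ⟨y, hy, h⟩
    exact ⟨y, hy, by rw [hW, h]⟩
  have hfin : ∀ (L : Set (ℂ × ℂ)), IsCompact L → (l : B) → (l : C(K', ℂ)) x' ≠ 0 →
      L.Nonempty →
      (∀ k : K', k.1 ∈ K1 ∪ K2 → k.1 ∉ L → (l : C(K', ℂ)) k = 0) → x ∈ polyHull2 L := by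
    intro L hL l hlx hLne hl
    rw [mem_polyHull2]
    intro g
    refine aux_root (c := ‖(l : C(K', ℂ)) x'‖) (C := ‖(l : C(K', ℂ))‖) ?_ (norm_pos_iff.2 hlx) fun N => ?_
    · obtain ⟨k, hk⟩ := hLne
      exact (norm_nonneg _).trans (le_supK hL g hk)
    · have := hbound (l * (⟨E g, hEB g⟩ : B) ^ N) (‖(l : C(K', ℂ))‖ * sSup ((fun w : ℂ × ℂ => ‖MvPolynomial.eval (evp w) g‖) '' L) ^ N) ?_
      · simpa [hE, x'] using this
      · intro k hk
        simp only [MulMemClass.coe_mul, SubmonoidClass.coe_pow, ContinuousMap.mul_apply,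
          ContinuousMap.pow_apply, norm_mul, norm_pow, hE]
        by_cases hkL : k.1 ∈ L
        · have h1 := le_supK hL g hkL
          have h2 := ContinuousMap.norm_coe_le_norm (l : C(K', ℂ)) k
          gcongr
        · rw [hl k hk hkL, norm_zero, zero_mul]
          obtain ⟨k, hk⟩ := hLne
          have := (norm_nonneg _).trans (le_supK hL g hk)
          positivity
  by_cases hx0 : MvPolynomial.eval (evp x) p = 0
  · -- x = 0
    left
    have hxeq : x = 0 := by
      obtain ⟨κ, hκ, hpk⟩ := aux_peak B hB W S ε' hε' hε'1 hS1 hS2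
      have hi : ∀ i : Fin 2, evp x i = 0 := by
        intro i
        have hle : ∀ s : ℝ, 0 < s → ‖evp x i‖ ^ 2 ≤ (s * κ * m)⁻¹ := by
          intro s hs
          obtain ⟨l, hl⟩ := hpk s hs
          have hb := hbound (l * ⟨E (MvPolynomial.X i ^ 2), hEB _⟩) ((s * κ * m)⁻¹) ?_
          · have h1 : (l : C(K', ℂ)) x' = 1 := (hl x').2 (by rw [hW]; simp [x', hx0])
            simpa [hE, x', h1] using hb
          · intro k hk
            have h1 := (hl k).1
            rw [hW, norm_neg] at h1
            have h2 := hp3 k.1 hk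
            have h3 : ‖evp k.1 i‖ ^ 2 ≤ ‖k.1.1‖ ^ 2 + ‖k.1.2‖ ^ 2 := by
              unfold evp
              split_ifs
              · nlinarith [sq_nonneg ‖k.1.2‖]
              · nlinarith [sq_nonneg ‖k.1.1‖]
            have h4 : ((l * ⟨E (MvPolynomial.X i ^ 2), hEB _⟩ : B) : C(K', ℂ)) k
                = (l : C(K', ℂ)) k * evp k.1 i ^ 2 := by
              change (l : C(K', ℂ)) k * E (MvPolynomial.X i ^ 2) k = _
              rw [hE]; simp
            rw [h4, norm_mul, norm_pow, ← one_div, le_div_iff₀ (by positivity)]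
            calc ‖(l : C(K', ℂ)) k‖ * ‖evp k.1 i‖ ^ 2 * (s * κ * m)
                = (s * κ * ‖(l : C(K', ℂ)) k‖) * (m * ‖evp k.1 i‖ ^ 2) := by ring
              _ ≤ (s * κ * ‖(l : C(K', ℂ)) k‖) * (m * (‖k.1.1‖ ^ 2 + ‖k.1.2‖ ^ 2)) := by gcongr
              _ ≤ (s * κ * ‖(l : C(K', ℂ)) k‖) * ‖MvPolynomial.eval (evp k.1) p‖ := by gcongr
              _ = s * κ * ‖MvPolynomial.eval (evp k.1) p‖ * ‖(l : C(K', ℂ)) k‖ := by ring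
              _ ≤ 1 := h1
        by_contra hcon
        have ha : 0 < ‖evp x i‖ ^ 2 := by have := norm_pos_iff.2 hcon; positivity
        have h5 := hle (2 / (‖evp x i‖ ^ 2 * κ * m)) (by positivity)
        have h6 : (2 / (‖evp x i‖ ^ 2 * κ * m) * κ * m)⁻¹ = ‖evp x i‖ ^ 2 / 2 := by
          field_simp
        rw [h6] at h5
        linarith
      have h0 := hi 0
      have h1 := hi 1
      simp [evp] at h0 h1
      exact Prod.ext h0 h1
    rw [hxeq]; exact h01
  obtain ⟨l, hl1, hl2⟩ := aux_sep B hB W S ε' hε' hε'1 hS1 hS2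
  have hnS : ∀ k : K', k.1 ∈ K1 → k ∈ S := fun k hk => hp1 _ hk
  by_cases hxS : x' ∈ S
  · left
    rw [← hc1]
    refine hfin K1 hK1 l ?_ ⟨0, h01⟩ ?_
    · rw [hl1 _ hxS, hW]
      simp [x', hx0, Real.pi_ne_zero]
    · intro k hk hkn
      by_cases hkS : k ∈ S
      · have hk2 : k.1 ∈ K2 := hk.resolve_left hkn
        rw [hl1 k hkS, hW]
        obtain ⟨y, hy, hky⟩ := hkS
        rcases hy.eq_or_lt with h0 | h0
        · simp [hky, ← h0]
        · exfalso
          have h3 := hp2 k.1 hk2 (by rw [hky]; exact_mod_cast h0.ne')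
          have h4 : arg (-(y : ℂ)) = Real.pi := by
            rw [Complex.arg_eq_pi_iff]; simp [h0]
          rw [hky, h4, abs_of_pos Real.pi_pos] at h3
          linarith
      · exact hl2 k hkS
  · right
    rw [← hc2]
    have hv : ∀ k, ((l - (2 * Real.pi * I : ℂ) • W : B) : C(K', ℂ)) k =
        (l : C(K', ℂ)) k - 2 * Real.pi * I * (W : C(K', ℂ)) k := by
      intro k
      rfl
    refine hfin K2 hK2 (l - (2 * Real.pi * I : ℂ) • W) ?_ ⟨0, h02⟩ ?_
    · rw [hv, hl2 _ hxS, hW]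
      simp [x', hx0, Real.pi_ne_zero]
    · intro k hk hkn
      rw [hv, hl1 k (hnS k (hk.resolve_right hkn))]
      ring

def qf (a b c : ℝ) (z : ℂ × ℂ) : ℂ := a * z.1 ^ 2 + 2 * b * z.1 * z.2 + c * z.2 ^ 2

lemma qf_cont (a b c : ℝ) : Continuous (qf a b c) := by unfold qf; fun_prop

lemma qf_hom (a b c : ℝ) (t : ℝ) (z : ℂ × ℂ) :
    qf a b c ((t : ℂ) • z) = ((t ^ 2 : ℝ) : ℂ) * qf a b c z := by
  simp [qf]; ring

lemma sphere_compact : IsCompact {z : ℂ × ℂ | ‖z.1‖ ^ 2 + ‖z.2‖ ^ 2 = 1} := by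
  apply Metric.isCompact_of_isClosed_isBounded
  · exact isClosed_eq (by fun_prop) (by fun_prop)
  · rw [isBounded_iff_forall_norm_le]
    refine ⟨1, fun z hz => ?_⟩
    have hz' : ‖z.1‖ ^ 2 + ‖z.2‖ ^ 2 = 1 := hz
    rw [Prod.norm_def, max_le_iff]
    constructor <;> nlinarith [sq_nonneg ‖z.1‖, sq_nonneg ‖z.2‖, norm_nonneg z.1, norm_nonneg z.2]

lemma ball_compact (r : ℝ) : IsCompact (eClosedBall r) := by
  apply Metric.isCompact_of_isClosed_isBounded
  · exact isClosed_le (by fun_prop) (by fun_prop)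
  · rw [isBounded_iff_forall_norm_le]
    refine ⟨|r|, fun z hz => ?_⟩
    have hz' : ‖z.1‖ ^ 2 + ‖z.2‖ ^ 2 ≤ r ^ 2 := hz
    rw [Prod.norm_def, max_le_iff]
    constructor <;> apply le_of_sq_le_sq _ (abs_nonneg r) <;> rw [sq_abs] <;>
      nlinarith [sq_nonneg ‖z.1‖, sq_nonneg ‖z.2‖]

lemma aux_normalize (z : ℂ × ℂ) (hz : z ≠ 0) : ∃ t : ℝ, 0 < t ∧ t ^ 2 = ‖z.1‖ ^ 2 + ‖z.2‖ ^ 2 ∧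
    ∃ u : ℂ × ℂ, ‖u.1‖ ^ 2 + ‖u.2‖ ^ 2 = 1 ∧ z = (t : ℂ) • u ∧ u = ((t⁻¹ : ℝ) : ℂ) • z := by
  have hpos : 0 < ‖z.1‖ ^ 2 + ‖z.2‖ ^ 2 := by
    by_cases h1 : z.1 = 0
    · have h2 : z.2 ≠ 0 := fun h2 => hz (Prod.ext h1 h2)
      have := norm_pos_iff.2 h2
      positivity
    · have := norm_pos_iff.2 h1
      positivity
  have hs := Real.sqrt_pos.2 hpos
  have hsq := Real.sq_sqrt hpos.le
  set t := √(‖z.1‖ ^ 2 + ‖z.2‖ ^ 2) with ht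
  refine ⟨t, hs, hsq, ((t⁻¹ : ℝ) : ℂ) • z, ?_, ?_, rfl⟩
  · simp only [Prod.smul_fst, Prod.smul_snd, smul_eq_mul, norm_mul, Complex.norm_real,
      Real.norm_eq_abs, abs_of_pos (inv_pos.2 hs), mul_pow, ← mul_add]
    rw [← hsq]; field_simp
  · rw [smul_smul, ← Complex.ofReal_mul, mul_inv_cancel₀ hs.ne']; simp

lemma cone_m {a b c : ℝ} {E : Set (ℂ × ℂ)} (hE : IsClosed E)
    (hsc : ∀ z ∈ E, ∀ t : ℝ, (t : ℂ) • z ∈ E) (h : ∀ z ∈ E, z ≠ 0 → qf a b c z ≠ 0) :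
    ∃ m : ℝ, 0 < m ∧ ∀ z ∈ E, m * (‖z.1‖ ^ 2 + ‖z.2‖ ^ 2) ≤ ‖qf a b c z‖ := by
  have hcpt := sphere_compact.inter_left hE
  obtain ⟨m, hm, hb⟩ : ∃ m : ℝ, 0 < m ∧ ∀ z ∈ E ∩ {z : ℂ × ℂ | ‖z.1‖ ^ 2 + ‖z.2‖ ^ 2 = 1},
      m ≤ ‖qf a b c z‖ := by
    refine hcpt.exists_forall_le' (qf_cont a b c).norm.continuousOn ?_
    rintro z ⟨hz, hz1⟩
    refine norm_pos_iff.2 (h z hz ?_)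
    rintro rfl
    simp at hz1
  refine ⟨m, hm, fun z hz => ?_⟩
  by_cases h0 : z = 0
  · simp [h0]
  obtain ⟨t, ht, ht2, u, hu, hzu, huz⟩ := aux_normalize z h0
  have h1 := hb u ⟨huz ▸ hsc z hz _, hu⟩
  rw [← ht2, hzu, qf_hom, norm_mul, Complex.norm_real, Real.norm_eq_abs, abs_of_pos (by positivity)]
  nlinarith [sq_nonneg t]

lemma cone_eps {a b c : ℝ} {E : Set (ℂ × ℂ)} (hE : IsClosed E)
    (hsc : ∀ z ∈ E, ∀ t : ℝ, (t : ℂ) • z ∈ E) (h : ∀ z ∈ E, z ≠ 0 → -qf a b c z ∈ slitPlane) :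
    ∃ ε : ℝ, 0 < ε ∧ ε < Real.pi ∧ ∀ z ∈ E, qf a b c z ≠ 0 → |arg (-qf a b c z)| ≤ Real.pi - ε := by
  have hcpt := sphere_compact.inter_left hE
  have hne : ∀ z ∈ E ∩ {z : ℂ × ℂ | ‖z.1‖ ^ 2 + ‖z.2‖ ^ 2 = 1}, -qf a b c z ∈ slitPlane := by
    rintro z ⟨hz, hz1⟩
    refine h z hz ?_
    rintro rfl
    simp at hz1
  obtain ⟨m, hm, hb⟩ : ∃ m : ℝ, 0 < m ∧ ∀ z ∈ E ∩ {z : ℂ × ℂ | ‖z.1‖ ^ 2 + ‖z.2‖ ^ 2 = 1},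
      m ≤ Real.pi - |arg (-qf a b c z)| := by
    refine hcpt.exists_forall_le' ?_ ?_
    · refine continuousOn_const.sub (ContinuousOn.abs ?_)
      intro z hz
      exact ((Complex.continuousAt_arg (hne z hz)).comp (f := fun z => -qf a b c z)
        (qf_cont a b c).neg.continuousAt).continuousWithinAt
    · intro z hz
      have h1 := (Complex.mem_slitPlane_iff_arg.1 (hne z hz)).1
      rw [sub_pos, abs_lt]
      exact ⟨Complex.neg_pi_lt_arg _, lt_of_le_of_ne (Complex.arg_le_pi _) h1⟩
  refine ⟨min m (Real.pi / 2), lt_min hm (by positivity), (min_le_right _ _).trans_lt (by linarith [Real.pi_pos]), fun z hz hq => ?_⟩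
  have h0 : z ≠ 0 := by
    rintro rfl
    simp [qf] at hq
  obtain ⟨t, ht, ht2, u, hu, hzu, huz⟩ := aux_normalize z h0
  have h1 := hb u ⟨huz ▸ hsc z hz _, hu⟩
  rw [hzu, qf_hom, ← mul_neg, Complex.arg_real_mul _ (by positivity)]
  have := min_le_left m (Real.pi / 2)
  linarith

lemma mem_plane0 {z : ℂ × ℂ} : z ∈ plane0 ↔ z.1.im = 0 ∧ z.2.im = 0 := by
  constructor
  · rintro ⟨x, y, rfl⟩; simp
  · rintro ⟨h1, h2⟩
    exact ⟨z.1.re, z.2.re, Prod.ext (Complex.ext (by simp) (by simp [h1]))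
      (Complex.ext (by simp) (by simp [h2]))⟩

lemma mem_planeOf {A : Matrix (Fin 2) (Fin 2) ℝ} {z : ℂ × ℂ} : z ∈ planeOf A ↔
    z.1.re = A 0 0 * z.1.im + A 0 1 * z.2.im ∧ z.2.re = A 1 0 * z.1.im + A 1 1 * z.2.im := by
  constructor
  · rintro ⟨x, y, rfl⟩; simp
  · rintro ⟨h1, h2⟩
    exact ⟨z.1.im, z.2.im, Prod.ext (Complex.ext (by simp [h1]) (by simp))
      (Complex.ext (by simp [h2]) (by simp))⟩

lemma plane0_closed : IsClosed plane0 := by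
  have : plane0 = {z : ℂ × ℂ | z.1.im = 0 ∧ z.2.im = 0} := Set.ext fun z => mem_plane0
  rw [this]
  exact (isClosed_eq (by fun_prop) (by fun_prop)).inter (isClosed_eq (by fun_prop) (by fun_prop))

lemma planeOf_closed (A : Matrix (Fin 2) (Fin 2) ℝ) : IsClosed (planeOf A) := by
  have : planeOf A = {z : ℂ × ℂ | z.1.re = A 0 0 * z.1.im + A 0 1 * z.2.im ∧
    z.2.re = A 1 0 * z.1.im + A 1 1 * z.2.im} := Set.ext fun z => mem_planeOf
  rw [this]
  exact (isClosed_eq (by fun_prop) (by fun_prop)).inter (isClosed_eq (by fun_prop) (by fun_prop))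

lemma plane0_smul : ∀ z ∈ plane0, ∀ t : ℝ, (t : ℂ) • z ∈ plane0 := by
  intro z hz t
  rw [mem_plane0] at hz ⊢
  simp [hz.1, hz.2]

lemma planeOf_smul (A : Matrix (Fin 2) (Fin 2) ℝ) :
    ∀ z ∈ planeOf A, ∀ t : ℝ, (t : ℂ) • z ∈ planeOf A := by
  intro z hz t
  rw [mem_planeOf] at hz ⊢
  simp [hz.1, hz.2]
  constructor <;> ring

lemma zero_mem_plane0 : (0 : ℂ × ℂ) ∈ plane0 := mem_plane0.2 (by simp)
lemma zero_mem_planeOf (A : Matrix (Fin 2) (Fin 2) ℝ) : (0 : ℂ × ℂ) ∈ planeOf A :=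
  mem_planeOf.2 (by simp)

lemma psd_kernel {m1 m2 m3 x y : ℝ} (hd : 0 ≤ m1 * m3 - m2 ^ 2)
    (h : m1 * x ^ 2 + 2 * m2 * x * y + m3 * y ^ 2 = 0) : m1 * x + m2 * y = 0 ∧ m2 * x + m3 * y = 0 := by
  constructor
  · have : (m1 * x + m2 * y) ^ 2 + (m1 * m3 - m2 ^ 2) * y ^ 2 = 0 := by linear_combination m1 * h
    have := mul_nonneg hd (sq_nonneg y)
    apply pow_eq_zero_iff (two_ne_zero) |>.1
    nlinarith [sq_nonneg (m1 * x + m2 * y)]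
  · have : (m2 * x + m3 * y) ^ 2 + (m1 * m3 - m2 ^ 2) * x ^ 2 = 0 := by linear_combination m3 * h
    have := mul_nonneg hd (sq_nonneg x)
    apply pow_eq_zero_iff (two_ne_zero) |>.1
    nlinarith [sq_nonneg (m2 * x + m3 * y)]

lemma qpos {a b c x y : ℝ} (ha : 0 < a) (hS : 0 < a * c - b ^ 2) (h : ¬ (x = 0 ∧ y = 0)) :
    0 < a * x ^ 2 + 2 * b * x * y + c * y ^ 2 := by
  have e : a * (a * x ^ 2 + 2 * b * x * y + c * y ^ 2) = (a * x + b * y) ^ 2 + (a * c - b ^ 2) * y ^ 2 := by ring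
  have : 0 < a * (a * x ^ 2 + 2 * b * x * y + c * y ^ 2) := by
    rw [e]
    by_cases hy : y = 0
    · have hx : x ≠ 0 := fun hx => h ⟨hx, hy⟩
      rw [hy]; simp; positivity
    · positivity
  exact pos_of_mul_pos_right this ha.le |> fun h => h

lemma planeOf_slit {a b c : ℝ} (ha : 0 < a) (hS : 0 < a * c - b ^ 2)
    (A : Matrix (Fin 2) (Fin 2) ℝ) (hd : 0 ≤ A.det)
    (hsym : a * A 0 1 + b * A 1 1 = b * A 0 0 + c * A 1 0) :
    ∀ z ∈ planeOf A, z ≠ 0 → -qf a b c z ∈ slitPlane := by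
  rintro _ ⟨x, y, rfl⟩ hz
  have hxy : ¬ (x = 0 ∧ y = 0) := by
    rintro ⟨rfl, rfl⟩; apply hz; ext <;> simp
  rw [Matrix.det_fin_two] at hd
  generalize A 0 0 = p at *
  generalize A 0 1 = q at *
  generalize A 1 0 = r at *
  generalize A 1 1 = s at *
  rw [mem_slitPlane_iff]
  by_contra hcon
  push Not at hcon
  obtain ⟨hre, him⟩ := hcon
  simp [qf, pow_two] at hre him
  have him' : (a * p + b * r) * x ^ 2 + 2 * (a * q + b * s) * x * y + (b * q + c * s) * y ^ 2 = 0 := by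
    have e : (b * p + c * r) * x * y = (a * q + b * s) * x * y := by rw [hsym]
    linear_combination (-1/2) * him - e
  obtain ⟨k1, k2⟩ := psd_kernel (by
    have : (a * p + b * r) * (b * q + c * s) - (a * q + b * s) ^ 2
      = (a * c - b ^ 2) * (p * s - q * r) := by linear_combination (-(a * q + b * s)) * hsym
    rw [this]; positivity) him'
  have k2' : b * (p * x + q * y) + c * (r * x + s * y) = 0 := by
    linear_combination k2 - x * hsym
  have k1' : a * (p * x + q * y) + b * (r * x + s * y) = 0 := by linear_combination k1
  have u0 : p * x + q * y = 0 := by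
    have : (a * c - b ^ 2) * (p * x + q * y) = 0 := by linear_combination c * k1' - b * k2'
    exact (mul_eq_zero.1 this).resolve_left hS.ne'
  have v0 : r * x + s * y = 0 := by
    have : (a * c - b ^ 2) * (r * x + s * y) = 0 := by linear_combination a * k2' - b * k1'
    exact (mul_eq_zero.1 this).resolve_left hS.ne'
  have := qpos ha hS hxy
  rw [u0, v0] at hre
  nlinarith

lemma plane0_polyconvex {r : ℝ} (hr : 0 < r) : PolyConvex2 (plane0 ∩ eClosedBall r) := by
  have h0 : (0 : ℂ × ℂ) ∈ plane0 ∩ eClosedBall r := ⟨zero_mem_plane0, by simp [eClosedBall]; positivity⟩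
  refine Set.Subset.antisymm ?_ (subset_hull ((ball_compact r).inter_left plane0_closed))
  intro x hx
  have him : ∀ i, (evp x i).im = 0 := by
    intro i
    by_contra hne
    have hle : ∀ s : ℝ, 1 - 2 * s * (evp x i).im + s ^ 2 * ‖evp x i‖ ^ 2 ≤ 1 + s ^ 2 * r ^ 2 := by
      intro s
      have hn : ∀ w : ℂ, ‖1 + s * I * w‖ ^ 2 = 1 - 2 * s * w.im + s ^ 2 * ‖w‖ ^ 2 := by
        intro w
        rw [← Complex.normSq_eq_norm_sq, ← Complex.normSq_eq_norm_sq, Complex.normSq_apply,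
          Complex.normSq_apply]
        simp; ring
      have := hull_le ⟨0, h0⟩ hx (1 + MvPolynomial.C (s * I) * MvPolynomial.X i)
        (M := √(1 + s ^ 2 * r ^ 2)) ?_
      · simp only [map_add, map_one, map_mul, MvPolynomial.eval_C, MvPolynomial.eval_X] at this
        rw [← hn]
        have h2 := pow_le_pow_left₀ (norm_nonneg _) this 2
        rwa [Real.sq_sqrt (by positivity)] at h2
      · rintro k ⟨hk, hkb⟩
        simp only [map_add, map_one, map_mul, MvPolynomial.eval_C, MvPolynomial.eval_X]
        apply Real.le_sqrt_of_sq_le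
        rw [hn]
        rw [mem_plane0] at hk
        have hkb' : ‖k.1‖ ^ 2 + ‖k.2‖ ^ 2 ≤ r ^ 2 := hkb
        have e1 : (evp k i).im = 0 := by unfold evp; split_ifs; exacts [hk.1, hk.2]
        have e2 : ‖evp k i‖ ^ 2 ≤ r ^ 2 := by
          unfold evp; split_ifs <;> nlinarith [sq_nonneg ‖k.1‖, sq_nonneg ‖k.2‖]
        rw [e1]
        nlinarith [sq_nonneg s]
    have h1 := hle (-(evp x i).im / r ^ 2)
    have h2 : 0 < (evp x i).im ^ 2 := by positivity
    have h3 : (-(evp x i).im / r ^ 2) ^ 2 * r ^ 2 = (evp x i).im ^ 2 / r ^ 2 := by field_simp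
    have h4 : 2 * (-(evp x i).im / r ^ 2) * (evp x i).im = - 2 * ((evp x i).im ^ 2 / r ^ 2) := by ring
    rw [h3, h4] at h1
    have h5 : 0 < (evp x i).im ^ 2 / r ^ 2 := by positivity
    have h6 : 0 ≤ (-(evp x i).im / r ^ 2) ^ 2 * ‖evp x i‖ ^ 2 := by positivity
    linarith
  have hx1 : x.1.im = 0 := by simpa [evp] using him 0
  have hx2 : x.2.im = 0 := by simpa [evp] using him 1
  have hx0 := mem_plane0.2 ⟨hx1, hx2⟩
  refine ⟨hx0, ?_⟩
  obtain ⟨u, v, rfl⟩ := hx0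
  have hb := hull_le ⟨0, h0⟩ hx (MvPolynomial.C (u : ℂ) * MvPolynomial.X 0 + MvPolynomial.C (v : ℂ) * MvPolynomial.X 1)
    (M := √(u ^ 2 + v ^ 2) * r) ?_
  · have e : MvPolynomial.eval (evp ((u : ℂ), (v : ℂ))) (MvPolynomial.C (u : ℂ) * MvPolynomial.X 0 + MvPolynomial.C (v : ℂ) * MvPolynomial.X 1) = ((u ^ 2 + v ^ 2 : ℝ) : ℂ) := by
      simp [evp]; ring
    rw [e, Complex.norm_real, Real.norm_eq_abs, abs_of_nonneg (by positivity)] at hb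
    simp only [eClosedBall, Set.mem_setOf_eq, Complex.norm_real, Real.norm_eq_abs, sq_abs]
    have hs := Real.sq_sqrt (show 0 ≤ u ^ 2 + v ^ 2 by positivity)
    have hs0 := Real.sqrt_nonneg (u ^ 2 + v ^ 2)
    set t := √(u ^ 2 + v ^ 2)
    rw [← hs] at hb ⊢
    rcases hs0.eq_or_lt with h | h
    · rw [← h]; simp; positivity
    · have : t ≤ r := by nlinarith
      gcongr
  · rintro k ⟨⟨x, y, rfl⟩, hkb⟩
    have e : MvPolynomial.eval (evp ((x : ℂ), (y : ℂ))) (MvPolynomial.C (u : ℂ) * MvPolynomial.X 0 + MvPolynomial.C (v : ℂ) * MvPolynomial.X 1) = ((u * x + v * y : ℝ) : ℂ) := by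
      simp [evp]
    simp only [eClosedBall, Set.mem_setOf_eq, Complex.norm_real, Real.norm_eq_abs, sq_abs] at hkb
    rw [e, Complex.norm_real, Real.norm_eq_abs]
    apply abs_le_of_sq_le_sq _ (by positivity)
    rw [mul_pow, Real.sq_sqrt (by positivity)]
    nlinarith [sq_nonneg (u * y - v * x), mul_nonneg (add_nonneg (sq_nonneg u) (sq_nonneg v)) (sub_nonneg.2 hkb)]

lemma find_form (A₁ A₂ : Matrix (Fin 2) (Fin 2) ℝ)
    (hcomm : 0 < (A₁ * A₂ - A₂ * A₁).det) : ∃ a b c : ℝ, 0 < a ∧ 0 < a * c - b ^ 2 ∧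
      a * A₁ 0 1 + b * A₁ 1 1 = b * A₁ 0 0 + c * A₁ 1 0 ∧
      a * A₂ 0 1 + b * A₂ 1 1 = b * A₂ 0 0 + c * A₂ 1 0 := by
  have key : ∃ a b c : ℝ, 0 < a * c - b ^ 2 ∧
      a * A₁ 0 1 + b * A₁ 1 1 = b * A₁ 0 0 + c * A₁ 1 0 ∧
      a * A₂ 0 1 + b * A₂ 1 1 = b * A₂ 0 0 + c * A₂ 1 0 := by
    rw [Matrix.det_fin_two] at hcomm
    simp only [Matrix.sub_apply, Matrix.mul_apply, Fin.sum_univ_two] at hcomm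
    refine ⟨A₁ 1 0 * A₂ 0 0 + A₁ 1 1 * A₂ 1 0 - (A₂ 1 0 * A₁ 0 0 + A₂ 1 1 * A₁ 1 0),
      -(A₁ 0 0 * A₂ 0 0 + A₁ 0 1 * A₂ 1 0 - (A₂ 0 0 * A₁ 0 0 + A₂ 0 1 * A₁ 1 0)),
      -(A₁ 0 0 * A₂ 0 1 + A₁ 0 1 * A₂ 1 1 - (A₂ 0 0 * A₁ 0 1 + A₂ 0 1 * A₁ 1 1)), ?_, ?_, ?_⟩
    · refine lt_of_lt_of_eq hcomm ?_
      ring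
    · ring
    · ring
  obtain ⟨a, b, c, h, h1, h2⟩ := key
  rcases lt_trichotomy a 0 with ha | ha | ha
  · exact ⟨-a, -b, -c, by linarith, by nlinarith, by linarith, by linarith⟩
  · rw [ha] at h; nlinarith [sq_nonneg b]
  · exact ⟨a, b, c, ha, h, h1, h2⟩

theorem stmt_14 (A₁ A₂ : Matrix (Fin 2) (Fin 2) ℝ)
    (htr0 : TotallyRealSet plane0)
    (htr1 : TotallyRealSet (planeOf A₁)) (htr2 : TotallyRealSet (planeOf A₂))
    (hpair01 : LocPolyConvexAt0 (plane0 ∪ planeOf A₁))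
    (hpair02 : LocPolyConvexAt0 (plane0 ∪ planeOf A₂))
    (hpair12 : LocPolyConvexAt0 (planeOf A₁ ∪ planeOf A₂))
    (hdet1 : A₁.det = 0) (hdet2 : 0 ≤ A₂.det)
    (hcomm : 0 < (A₁ * A₂ - A₂ * A₁).det) :
    LocPolyConvexAt0 (plane0 ∪ planeOf A₁ ∪ planeOf A₂) := by
  obtain ⟨a, b, c, ha, hS, hs1, hs2⟩ := find_form A₁ A₂ hcomm
  obtain ⟨r, hr, hconv⟩ := hpair12
  refine ⟨r, hr, ?_⟩
  have hset : (plane0 ∪ planeOf A₁ ∪ planeOf A₂) ∩ eClosedBall r =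
      (plane0 ∩ eClosedBall r) ∪ ((planeOf A₁ ∪ planeOf A₂) ∩ eClosedBall r) := by
    rw [Set.union_assoc, Set.union_inter_distrib_right]
  rw [hset]
  have hcl12 : IsClosed (planeOf A₁ ∪ planeOf A₂) := (planeOf_closed A₁).union (planeOf_closed A₂)
  have hsc12 : ∀ z ∈ planeOf A₁ ∪ planeOf A₂, ∀ t : ℝ, (t : ℂ) • z ∈ planeOf A₁ ∪ planeOf A₂ := by
    rintro z (hz | hz) t
    · exact Or.inl (planeOf_smul _ z hz t)
    · exact Or.inr (planeOf_smul _ z hz t)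
  have hsl : ∀ z ∈ planeOf A₁ ∪ planeOf A₂, z ≠ 0 → -qf a b c z ∈ slitPlane := by
    rintro z (hz | hz)
    · exact planeOf_slit ha hS A₁ hdet1.ge hs1 z hz
    · exact planeOf_slit ha hS A₂ hdet2 hs2 z hz
  have hq0 : ∀ x y : ℝ, qf a b c ((x : ℂ), (y : ℂ)) =
      ((a * x ^ 2 + 2 * b * x * y + c * y ^ 2 : ℝ) : ℂ) := by
    intro x y; simp [qf]
  obtain ⟨ε, hε, hε1, hεb⟩ := cone_eps hcl12 hsc12 hsl
  obtain ⟨m, hm, hmb⟩ := cone_m (a := a) (b := b) (c := c) (plane0_closed.union hcl12) (by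
      rintro z (hz | hz) t
      · exact Or.inl (plane0_smul z hz t)
      · exact Or.inr (hsc12 z hz t)) (by
      rintro z (hz | hz) h0
      · obtain ⟨x, y, rfl⟩ := hz
        rw [hq0]
        have := qpos (x := x) (y := y) ha hS (by
          rintro ⟨rfl, rfl⟩; apply h0; ext <;> simp)
        exact_mod_cast this.ne'
      · have := slitPlane_ne_zero (hsl z hz h0)
        simpa using this)
  have hball : (0 : ℂ × ℂ) ∈ eClosedBall r := by simp [eClosedBall]; positivity
  have hev : ∀ z : ℂ × ℂ, MvPolynomial.eval (evp z)
      (MvPolynomial.C (a : ℂ) * MvPolynomial.X 0 ^ 2 + MvPolynomial.C (2 * b : ℂ) * MvPolynomial.X 0 * MvPolynomial.X 1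
        + MvPolynomial.C (c : ℂ) * MvPolynomial.X 1 ^ 2) = qf a b c z := by
    intro z; simp [evp, qf]
  refine kallin ((ball_compact r).inter_left plane0_closed) ((ball_compact r).inter_left hcl12)
    ⟨zero_mem_plane0, hball⟩ ⟨Or.inl (zero_mem_planeOf A₁), hball⟩ (plane0_polyconvex hr) hconv
    (MvPolynomial.C (a : ℂ) * MvPolynomial.X 0 ^ 2 + MvPolynomial.C (2 * b : ℂ) * MvPolynomial.X 0 * MvPolynomial.X 1
        + MvPolynomial.C (c : ℂ) * MvPolynomial.X 1 ^ 2) ?_ ε hε hε1 ?_ m hm ?_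
  · rintro k ⟨⟨x, y, rfl⟩, -⟩
    refine ⟨_, ?_, (hev _).trans (hq0 x y)⟩
    by_cases h : x = 0 ∧ y = 0
    · simp [h.1, h.2]
    · exact (qpos ha hS h).le
  · rintro k ⟨hk, -⟩
    rw [hev]
    exact hεb k hk
  · intro k hk
    rw [hev]
    refine hmb k ?_
    rcases hk with hk | hk
    · exact Or.inl hk.1
    · exact Or.inr hk.1
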